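/- arXiv:2111.04365 — 2 statements merged into one kernel-verified Lean document; each statement's English description precedes it below -/
import Mathlib

section
/- Let G be a group, K a normal subgroup of G, and N ∈ ℕ ∪ {∞}. If the bounded cohomology H^n_b(K; ℝ) vanishes for all 0 < n < N, then the inflation map H^n_b(G/K; ℝ) → H^n_b(G; ℝ) is an isomorphism for all 0 ≤ n < N. -/
/-- A real-valued function is bounded. -/
def IsBddFun {α : Type*} (f : α → ℝ) : Prop := ∃ C : ℝ, ∀ x, |f x| ≤ C

/-- A homogeneous cochain is `G`-invariant. -/
def IsInvCochain {G : Type*} [Group G] {n : ℕ} (c : (Fin n → G) → ℝ) : Prop :=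
  ∀ (g : G) (x : Fin n → G), c (fun i => g * x i) = c x

/-- The simplicial coboundary on homogeneous cochains. -/
noncomputable def gcoboundary {G : Type*} [Group G] {n : ℕ}
    (c : (Fin n → G) → ℝ) : (Fin (n + 1) → G) → ℝ :=
  fun x => ∑ i : Fin (n + 1), (-1 : ℝ) ^ (i : ℕ) * c (x ∘ i.succAbove)

/-- Inflation of a cochain along the quotient map `G → G ⧸ K`. -/
def inflate {G : Type*} [Group G] (K : Subgroup G) [K.Normal] {n : ℕ}
    (c : (Fin n → G ⧸ K) → ℝ) : (Fin n → G) → ℝ :=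
  fun x => c (fun i => QuotientGroup.mk (x i))


namespace BC

/-- Simplicial coboundary on functions of lists. -/
noncomputable def del {A : Type*} : (List A → ℝ) → List A → ℝ
  | _, [] => 0
  | f, a :: l => f l - del (fun w => f (a :: w)) l

/-- Total coboundary on functions of pairs of lists. -/
noncomputable def tot {A B : Type*} : (List B → List A → ℝ) → List B → List A → ℝ
  | f, [], y => del (f []) y
  | f, b :: x, y => f x y - tot (fun w => f (b :: w)) x y

/-- Prism operator. -/
noncomputable def prism {A B : Type*} (π : A → B) : (List B → List A → ℝ) → List A → ℝ
  | _, [] => 0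
  | f, a :: y => f [π a] (a :: y) - prism π (fun w => f (π a :: w)) y

section
variable {A B : Type*}

lemma del_sub (f g : List A → ℝ) (l : List A) :
    del (fun w => f w - g w) l = del f l - del g l := by
  induction l generalizing f g with
  | nil => simp [del]
  | cons a l ih => simp only [del, ih]; ring

lemma del_smul (r : ℝ) (f : List A → ℝ) (l : List A) :
    del (fun w => r * f w) l = r * del f l := by
  induction l generalizing f with
  | nil => simp [del]
  | cons a l ih => simp only [del, ih]; ring

lemma del_zero (l : List A) : del (fun _ => (0 : ℝ)) l = 0 := by
  induction l with
  | nil => simp [del]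
  | cons a l ih => simp only [del, ih]; ring

lemma del_del (f : List A → ℝ) (l : List A) : del (del f) l = 0 := by
  induction l generalizing f with
  | nil => simp [del]
  | cons a l ih => simp only [del, del_sub, ih]; ring

lemma del_congr {f g : List A → ℝ} (l : List A)
    (h : ∀ w : List A, w.length + 1 = l.length → f w = g w) : del f l = del g l := by
  induction l generalizing f g with
  | nil => simp [del]
  | cons a l ih =>
    simp only [del]
    rw [h l (by simp), ih]
    intro w hw
    exact h _ (by simp [hw])

lemma del_map (φ : A → B) (f : List B → ℝ) (l : List A) :
    del f (l.map φ) = del (fun w => f (w.map φ)) l := by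
  induction l generalizing f with
  | nil => simp [del]
  | cons a l ih => simp only [del, List.map_cons, ih]

lemma del_bound {f : List A → ℝ} {C : ℝ} (l : List A)
    (h : ∀ w : List A, w.length + 1 = l.length → |f w| ≤ C) : |del f l| ≤ l.length * C := by
  induction l generalizing f with
  | nil => simp [del]
  | cons a l ih =>
    simp only [del]
    have h1 := h l (by simp)
    have h2 := ih (f := fun w => f (a :: w)) (fun w hw => h _ (by simp [hw]))
    have := abs_sub (f l) (del (fun w => f (a :: w)) l)
    push_cast [List.length_cons]
    linarith

lemma del_comm (f : List B → List A → ℝ) (x : List B) (y : List A) :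
    del (fun v => del (fun w => f w v) x) y = del (fun w => del (f w) y) x := by
  induction x generalizing f with
  | nil => simp [del, del_zero]
  | cons a l ih =>
    simp only [del]
    rw [del_sub, ih (fun w => f (a :: w))]

lemma tot_eq (f : List B → List A → ℝ) (x : List B) (y : List A) :
    tot f x y = del (fun w => f w y) x + (-1) ^ x.length * del (f x) y := by
  induction x generalizing f with
  | nil => simp [del, tot]
  | cons a l ih => simp only [del, tot, ih, List.length_cons, pow_succ]; ring

lemma tot_append (π : A → B) (c : List B → ℝ) (x : List B) (y : List A) :
    tot (fun x y => c (x ++ y.map π)) x y = del c (x ++ y.map π) := by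
  induction x generalizing c with
  | nil => simp [tot, del_map]
  | cons a l ih =>
    simp only [del, tot, List.cons_append]
    rw [ih (fun w => c (a :: w))]

lemma prism_sub (π : A → B) (f g : List B → List A → ℝ) (y : List A) :
    prism π (fun v w => f v w - g v w) y = prism π f y - prism π g y := by
  induction y generalizing f g with
  | nil => simp [prism]
  | cons a l ih => simp only [prism, ih]; ring

lemma prism_id (π : A → B) (f : List B → List A → ℝ) (y : List A) :
    del (prism π f) y + prism π (tot f) y = f [] y - f (y.map π) [] := by
  induction y generalizing f with
  | nil => simp [prism, del]
  | cons a l ih =>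
    have := ih (fun w => f (π a :: w))
    simp only [prism, del, tot, del_sub, prism_sub, List.map_cons] at this ⊢
    linarith

lemma prism_congr (π : A → B) {f g : List B → List A → ℝ} (y : List A)
    (h : ∀ x w, x.length + w.length = y.length + 1 → f x w = g x w) :
    prism π f y = prism π g y := by
  induction y generalizing f g with
  | nil => simp [prism]
  | cons a l ih =>
    simp only [prism]
    rw [h [π a] (a :: l) (by simp; omega), ih]
    intro x w hw
    exact h _ _ (by simp; omega)

lemma prism_bound (π : A → B) {f : List B → List A → ℝ} {C : ℝ} (y : List A)
    (h : ∀ x w, x.length + w.length = y.length + 1 → |f x w| ≤ C) :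
    |prism π f y| ≤ y.length * C := by
  induction y generalizing f with
  | nil => simp [prism]
  | cons a l ih =>
    simp only [prism]
    have h1 := h [π a] (a :: l) (by simp; omega)
    have h2 := ih (f := fun w => f (π a :: w)) (fun x w hw => h _ _ (by simp; omega))
    have := abs_sub (f [π a] (a :: l)) (prism π (fun w => f (π a :: w)) l)
    push_cast [List.length_cons]
    linarith

/-- naturality of the prism operator -/
lemma prism_map {A' B' : Type*} (π : A → B) (π' : A' → B') (φ : A → A') (ψ : B → B')
    (h : ∀ a, π' (φ a) = ψ (π a)) (f : List B' → List A' → ℝ) (y : List A) :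
    prism π' f (y.map φ) = prism π (fun x w => f (x.map ψ) (w.map φ)) y := by
  induction y generalizing f with
  | nil => simp [prism]
  | cons a l ih => simp only [prism, List.map_cons, ih, h, List.map_nil]

end

/-- Extension of a cochain to a function on lists. -/
noncomputable def ext {G : Type*} [Group G] {n : ℕ} (c : (Fin n → G) → ℝ) (l : List G) : ℝ :=
  if l.length = n then c (fun i => l.getD i 1) else 0

section
variable {G : Type*} [Group G]

lemma ext_ofFn {n : ℕ} (c : (Fin n → G) → ℝ) (x : Fin n → G) : ext c (List.ofFn x) = c x := by
  simp [ext]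

lemma exists_ofFn {A : Type*} {n : ℕ} (l : List A) (h : l.length = n) :
    ∃ x : Fin n → A, l = List.ofFn x := by
  subst h
  exact ⟨l.get, by simp⟩

lemma ext_inv {n : ℕ} {c : (Fin n → G) → ℝ} (hc : IsInvCochain c) (g : G) (l : List G) :
    ext c (l.map (g * ·)) = ext c l := by
  by_cases h : l.length = n
  · obtain ⟨x, rfl⟩ := exists_ofFn l h
    rw [List.map_ofFn, ext_ofFn, ext_ofFn]
    exact hc g x
  · simp [ext, h]

lemma ext_bdd {n : ℕ} {c : (Fin n → G) → ℝ} {C : ℝ} (hC : 0 ≤ C) (hc : ∀ x, |c x| ≤ C)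
    (l : List G) : |ext c l| ≤ C := by
  unfold ext; split_ifs
  · exact hc _
  · simpa

lemma gcob_ofFn {n : ℕ} (F : List G → ℝ) (y : Fin (n + 1) → G) :
    gcoboundary (fun x : Fin n → G => F (List.ofFn x)) y = del F (List.ofFn y) := by
  induction n generalizing F with
  | zero => simp [gcoboundary, del]
  | succ n ih =>
    rw [List.ofFn_succ, del, ← ih]
    simp only [gcoboundary]
    rw [Fin.sum_univ_succ, sub_eq_add_neg, ← Finset.sum_neg_distrib]
    congr 1
    · simp [Function.comp_def]
    · refine Finset.sum_congr rfl fun i _ => ?_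
      rw [List.ofFn_succ (f := y ∘ i.succ.succAbove)]
      simp [Function.comp_def, pow_succ]

lemma gcob_eq {n : ℕ} (c : (Fin n → G) → ℝ) (y : Fin (n + 1) → G) :
    gcoboundary c y = del (ext c) (List.ofFn y) := by
  rw [← gcob_ofFn]; simp [ext_ofFn]

end

section unif
variable {α : Type*}

abbrev LI (α : Type*) := lp (fun _ : α => ℝ) ⊤

/-- evaluation -/
noncomputable def ev (a : α) : LI α →L[ℝ] ℝ :=
  LinearMap.mkContinuous
    { toFun := fun f => f a
      map_add' := fun f g => by simp
      map_smul' := fun r f => by simp } 1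
    (fun f => by rw [one_mul]; exact lp.norm_apply_le_norm (by simp) f a)

lemma ev_apply (a : α) (f : LI α) : ev a f = f a := rfl

noncomputable def mkLI (f : α → ℝ) (h : IsBddFun f) : LI α :=
  ⟨f, memℓp_infty (by obtain ⟨C, hC⟩ := h; exact ⟨C, by rintro _ ⟨x, rfl⟩; exact hC x⟩)⟩

lemma mkLI_apply (f : α → ℝ) (h : IsBddFun f) (a : α) : mkLI f h a = f a := rfl

lemma gcob_bdd {G : Type*} [Group G] {n : ℕ} {c : (Fin n → G) → ℝ} {C : ℝ}
    (h : ∀ x, |c x| ≤ C) (x : Fin (n + 1) → G) : |gcoboundary c x| ≤ (n + 1) * C := by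
  unfold gcoboundary
  refine (Finset.abs_sum_le_sum_abs _ _).trans ?_
  refine (Finset.sum_le_sum (g := fun _ => C) fun i _ => ?_).trans ?_
  · simpa [abs_mul] using h _
  · simp

lemma gcob_add {G : Type*} [Group G] {n : ℕ} (c d : (Fin n → G) → ℝ) :
    gcoboundary (c + d) = gcoboundary c + gcoboundary d := by
  ext x; simp [gcoboundary, mul_add, Finset.sum_add_distrib]

lemma gcob_smul {G : Type*} [Group G] {n : ℕ} (r : ℝ) (c : (Fin n → G) → ℝ) :
    gcoboundary (r • c) = r • gcoboundary c := by
  ext x; simp only [gcoboundary, Pi.smul_apply, smul_eq_mul, Finset.mul_sum]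
  exact Finset.sum_congr rfl fun i _ => by ring

/-- invariant bounded cochains -/
noncomputable def invSub (H : Type*) [Group H] (n : ℕ) : Submodule ℝ (LI (Fin n → H)) :=
  ⨅ p : H × (Fin n → H), ((ev (fun i => p.1 * p.2 i) - ev p.2 : LI (Fin n → H) →L[ℝ] ℝ)).ker

lemma mem_invSub {H : Type*} [Group H] {n : ℕ} (f : LI (Fin n → H)) :
    f ∈ invSub H n ↔ IsInvCochain (fun x => f x) := by
  simp [invSub, Submodule.mem_iInf, IsInvCochain, ev_apply, sub_eq_zero]

/-- bounded coboundary -/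
noncomputable def dL (H : Type*) [Group H] (n : ℕ) : LI (Fin n → H) →L[ℝ] LI (Fin (n + 1) → H) :=
  LinearMap.mkContinuous
    { toFun := fun f => mkLI (gcoboundary fun x => f x)
        ⟨_, gcob_bdd (C := ‖f‖) fun x => lp.norm_apply_le_norm (by simp) f x⟩
      map_add' := fun f g => by
        ext x; exact congrFun (gcob_add (fun x => f x) (fun x => g x)) x
      map_smul' := fun r f => by
        ext x; exact congrFun (gcob_smul r (fun x => f x)) x } (n + 1)
    (fun f => lp.norm_le_of_forall_le (by positivity) fun x =>
      gcob_bdd (C := ‖f‖) (fun x => lp.norm_apply_le_norm (by simp) f x) x)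

lemma dL_apply {H : Type*} [Group H] {n : ℕ} (f : LI (Fin n → H)) (x) :
    dL H n f x = gcoboundary (fun x => f x) x := rfl

lemma gcob_inv {H : Type*} [Group H] {n : ℕ} {c : (Fin n → H) → ℝ} (h : IsInvCochain c) :
    IsInvCochain (gcoboundary c) := by
  intro g x
  simp only [gcoboundary]
  refine Finset.sum_congr rfl fun i _ => ?_
  congr 1
  exact h g (x ∘ i.succAbove)

lemma gcob_gcob {H : Type*} [Group H] {n : ℕ} (c : (Fin n → H) → ℝ) :
    gcoboundary (gcoboundary c) = 0 := by
  ext x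
  have : gcoboundary c = fun y => del (ext c) (List.ofFn y) := funext fun y => gcob_eq c y
  rw [this, gcob_ofFn, del_del]; rfl

lemma unif {H : Type*} [Group H] (q : ℕ)
    (hK : ∀ c : (Fin (q + 1) → H) → ℝ, IsInvCochain c → IsBddFun c → gcoboundary c = 0 →
        ∃ b : (Fin q → H) → ℝ, IsInvCochain b ∧ IsBddFun b ∧ gcoboundary b = c) :
    ∃ C : ℝ, 0 ≤ C ∧ ∀ c : (Fin (q + 1) → H) → ℝ, IsInvCochain c → ∀ M : ℝ, 0 ≤ M →
      (∀ x, |c x| ≤ M) → gcoboundary c = 0 →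
        ∃ b : (Fin q → H) → ℝ, IsInvCochain b ∧ (∀ x, |b x| ≤ C * M) ∧ gcoboundary b = c := by
  have hcl : ∀ n, IsClosed (invSub H n : Set (LI (Fin n → H))) := fun n => by
    rw [invSub, Submodule.coe_iInf]
    exact isClosed_iInter fun p => ContinuousLinearMap.isClosed_ker _
  let Z : Submodule ℝ (LI (Fin (q + 1) → H)) := invSub H (q + 1) ⊓ (dL H (q + 1)).ker
  have hZ : IsClosed (Z : Set (LI (Fin (q + 1) → H))) :=
    (hcl _).inter (ContinuousLinearMap.isClosed_ker _)
  have : CompleteSpace (invSub H q) := (hcl q).completeSpace_coe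
  have : CompleteSpace Z := hZ.completeSpace_coe
  let T : invSub H q →L[ℝ] Z :=
    ((dL H q).comp (invSub H q).subtypeL).codRestrict Z (by
      rintro ⟨f, hf⟩
      refine ⟨(mem_invSub _).2 (gcob_inv ((mem_invSub _).1 hf)), ?_⟩
      rw [SetLike.mem_coe, LinearMap.mem_ker]
      ext x
      exact congrFun (gcob_gcob (fun x => f x)) x)
  have hT : Function.Surjective T := by
    rintro ⟨c, hc1, hc2⟩
    obtain ⟨b, hb1, hb2, hb3⟩ := hK (fun x => c x) ((mem_invSub _).1 hc1)
      ⟨‖c‖, fun x => lp.norm_apply_le_norm (by simp) c x⟩ (by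
        ext x
        rw [SetLike.mem_coe, LinearMap.mem_ker] at hc2
        exact congrArg (fun f : LI (Fin (q + 1 + 1) → H) => f x) hc2)
    refine ⟨⟨mkLI b hb2, (mem_invSub _).2 hb1⟩, ?_⟩
    apply Subtype.ext
    ext x
    exact congrFun hb3 x
  obtain ⟨C, hC, h⟩ := ContinuousLinearMap.exists_preimage_norm_le T hT
  refine ⟨C, hC.le, fun c hc M hM hcM hz => ?_⟩
  let c' : Z := ⟨mkLI c ⟨M, hcM⟩, (mem_invSub _).2 hc, by
    rw [SetLike.mem_coe, LinearMap.mem_ker]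
    ext x
    exact congrFun hz x⟩
  obtain ⟨b, hb1, hb2⟩ := h c'
  have hn : ‖c'‖ ≤ M := lp.norm_le_of_forall_le hM hcM
  refine ⟨fun x => b.1 x, (mem_invSub _).1 b.2, fun x => ?_, ?_⟩
  · refine (lp.norm_apply_le_norm (by simp) b.1 x).trans ?_
    exact hb2.trans (mul_le_mul_of_nonneg_left hn hC.le)
  · ext x
    exact congrArg (fun f : Z => f.1 x) hb1

end unif

lemma del_add {A : Type*} (f g : List A → ℝ) (l : List A) :
    del (fun w => f w + g w) l = del f l + del g l := by
  induction l generalizing f g with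
  | nil => simp [del]
  | cons a l ih => simp only [del, ih]; ring

/-- Vanishing of bounded cohomology of `H` in degree `q`. -/
def Van (H : Type*) [Group H] (q : ℕ) : Prop :=
  ∀ c : (Fin (q + 1) → H) → ℝ, IsInvCochain c → IsBddFun c → gcoboundary c = 0 →
    ∃ b : (Fin q → H) → ℝ, IsInvCochain b ∧ IsBddFun b ∧ gcoboundary b = c

section fam
variable {G : Type*} [Group G]

lemma exists_rho (K : Subgroup G) : ∃ ρ : G → K, ∀ (k : K) (g : G), ρ (k * g) = k * ρ g := by
  let rep : G → G := fun g => (Quotient.mk (QuotientGroup.rightRel K) g).out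
  have h1 : ∀ g, g * (rep g)⁻¹ ∈ K := fun g =>
    QuotientGroup.rightRel_apply.1 (Quotient.mk_out (s := QuotientGroup.rightRel K) g)
  have h2 : ∀ (k : K) g, rep (k * g) = rep g := fun k g => by
    have : Quotient.mk (QuotientGroup.rightRel K) (k * g) =
        Quotient.mk (QuotientGroup.rightRel K) g := by
      apply Quotient.sound
      refine QuotientGroup.rightRel_apply.2 ?_
      have := K.inv_mem k.2
      simpa using this
    simp only [rep, this]
  refine ⟨fun g => ⟨g * (rep g)⁻¹, h1 g⟩, fun k g => ?_⟩
  apply Subtype.ext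
  simp [h2, mul_assoc]

lemma famK (K : Subgroup G) (q : ℕ) (hK : ∀ r, 0 < r → r + 1 = q → Van K r)
    {S : Type*} (f : S → List G → ℝ)
    (hinv : ∀ s, ∀ k : K, ∀ y, f s (y.map ((k : G) * ·)) = f s y) (C : ℝ) (hC : 0 ≤ C)
    (hb : ∀ s y, y.length = q → |f s y| ≤ C)
    (hz : ∀ s y, y.length = q + 1 → del (f s) y = 0) :
    ∃ g : S → List G → ℝ, (∀ s, ∀ k : K, ∀ y, g s (y.map ((k : G) * ·)) = g s y) ∧
      (∃ C' : ℝ, 0 ≤ C' ∧ ∀ s y, |g s y| ≤ C') ∧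
      ∀ s y, y.length = q → del (g s) y = f s y := by
  rcases q with _ | _ | r
  · refine ⟨fun _ _ => 0, by simp, ⟨0, by simp⟩, fun s y hy => ?_⟩
    obtain rfl : y = [] := List.length_eq_zero_iff.1 hy
    have := hz s [1] rfl
    simpa [del] using this.symm
  · refine ⟨fun s _ => f s [1], by simp, ⟨C, hC, fun s y => hb s _ rfl⟩, fun s y hy => ?_⟩
    obtain ⟨a, rfl⟩ := List.length_eq_one_iff.1 hy
    have := hz s [1, a] rfl
    simp only [del] at this ⊢
    linarith
  · obtain ⟨C0, hC0, hu⟩ := unif (r + 1) (hK (r + 1) (by omega) rfl)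
    obtain ⟨ρ, hρ⟩ := exists_rho K
    have key : ∀ s, ∃ b : (Fin (r + 1) → K) → ℝ, IsInvCochain b ∧ (∀ x, |b x| ≤ C0 * C) ∧
        gcoboundary b = fun x : Fin (r + 1 + 1) → K => f s ((List.ofFn x).map Subtype.val) := by
      intro s
      apply hu
      · intro k x
        have := hinv s k ((List.ofFn x).map Subtype.val)
        refine Eq.trans ?_ this
        simp [List.map_ofFn, Function.comp_def]
      · exact hC
      · intro x
        exact hb s _ (by simp)
      · ext x
        rw [gcob_ofFn (fun l : List K => f s (l.map Subtype.val)), ← del_map]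
        exact hz s _ (by simp)
    choose b hb1 hb2 hb3 using key
    refine ⟨fun s y => if y.length = r + 1 then ext (b s) (y.map ρ) +
      prism (fun a => (ρ a : G)) (fun x w => f s (x ++ w)) y else 0, ?_, ?_, ?_⟩
    · intro s k y
      simp only [List.length_map]
      split_ifs with h
      · congr 1
        · rw [← ext_inv (hb1 s) k (y.map ρ)]
          simp [Function.comp_def, hρ]
        · rw [prism_map (fun a => (ρ a : G)) (fun a => (ρ a : G)) ((k : G) * ·) ((k : G) * ·)
            (by simp [hρ])]
          simp only [← List.map_append, hinv]
      · rfl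
    · refine ⟨C0 * C + ((r + 1 : ℕ) : ℝ) * C, by positivity, fun s y => ?_⟩
      dsimp only
      split_ifs with h
      · refine (abs_add_le _ _).trans (add_le_add (ext_bdd (by positivity) (hb2 s) _) ?_)
        have := prism_bound (fun a => (ρ a : G)) (f := fun x w => f s (x ++ w)) (C := C) y
          (fun x w hw => hb s _ (by simp; omega))
        rwa [h] at this
      · rw [abs_zero]; positivity
    · intro s y hy
      rw [del_congr (g := fun y => ext (b s) (y.map ρ) +
        prism (fun a => (ρ a : G)) (fun x w => f s (x ++ w)) y) y
        (fun w hw => if_pos (by omega)), del_add, ← del_map]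
      obtain ⟨z, hz'⟩ := exists_ofFn (y.map ρ) (n := r + 1 + 1) (by simpa using hy)
      have e1 : del (ext (b s)) (y.map ρ) = f s (y.map fun a => (ρ a : G)) := by
        rw [hz', ← gcob_eq, hb3]
        dsimp only
        rw [← hz']
        simp [Function.comp_def]
      have e2 := prism_id (fun a => (ρ a : G)) (fun x w => f s (x ++ w)) y
      have e3 : prism (fun a => (ρ a : G)) (tot (fun x w => f s (x ++ w))) y = 0 := by
        have := prism_bound (fun a => (ρ a : G)) (f := tot (fun x w => f s (x ++ w))) (C := 0) y
          (fun x w hw => by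
            have := tot_append id (f s) x w
            simp only [List.map_id] at this
            rw [this, hz s _ (by simp; omega)]; simp)
        simpa using this
      simp only [List.nil_append, List.append_nil] at e2
      rw [e1]
      linarith

lemma exactness (K : Subgroup G) [K.Normal] (q : ℕ) (hK : ∀ r, 0 < r → r + 1 = q → Van K r)
    (f : List (G ⧸ K) → List G → ℝ)
    (hinv : ∀ (g : G) x y, f (x.map ((g : G ⧸ K) * ·)) (y.map (g * ·)) = f x y)
    (C : ℝ) (hC : 0 ≤ C)
    (hb : ∀ x y, y.length = q → |f x y| ≤ C)
    (hz : ∀ x y, y.length = q + 1 → del (f x) y = 0) :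
    ∃ g : List (G ⧸ K) → List G → ℝ,
      (∀ (a : G) x y, g (x.map ((a : G ⧸ K) * ·)) (y.map (a * ·)) = g x y) ∧
      (∃ C' : ℝ, 0 ≤ C' ∧ ∀ x y, |g x y| ≤ C') ∧
      ∀ x y, x ≠ [] → y.length = q → del (g x) y = f x y := by
  have hk1 : ∀ k : K, ((k : G) : G ⧸ K) = 1 := fun k => (QuotientGroup.eq_one_iff _).2 k.2
  obtain ⟨γ, hγ1, ⟨C', hC', hγ2⟩, hγ3⟩ := famK K q hK (fun s : List (G ⧸ K) => f (1 :: s))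
    (by
      intro s k y
      have := hinv k (1 :: s) y
      rw [← this]
      simp [hk1]) C hC (fun s y => hb _ y) (fun s y => hz _ y)
  let T : (G ⧸ K) → List (G ⧸ K) → List G → ℝ := fun x0 x y =>
    γ (x.map (((x0.out⁻¹ : G) : G ⧸ K) * ·)) (y.map ((x0.out⁻¹ : G) * ·))
  let g : List (G ⧸ K) → List G → ℝ := fun x y => match x with
    | [] => 0
    | x0 :: x => T x0 x y
  refine ⟨g, ?_, ⟨C', hC', ?_⟩, ?_⟩
  · rintro a (_ | ⟨x0, x⟩) y
    · rfl
    · simp only [g, List.map_cons, T]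
      have hmem : x0.out⁻¹ * (a⁻¹ * ((a : G ⧸ K) * x0).out) ∈ K := by
        rw [← QuotientGroup.eq_one_iff]
        simp
      set k : K := ⟨_, hmem⟩ with hk
      have hk2 : (((a : G ⧸ K) * x0).out)⁻¹ * a = ((k⁻¹ : K) : G) * x0.out⁻¹ := by
        rw [hk]; simp [mul_assoc]
      rw [← hγ1 _ k⁻¹ (y.map ((x0.out⁻¹ : G) * ·))]
      congr 1
      · rw [List.map_map]
        refine List.map_congr_left fun z _ => ?_
        simp only [Function.comp_def]
        rw [← mul_assoc, ← QuotientGroup.mk_mul, hk2, QuotientGroup.mk_mul, hk1, one_mul]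
      · rw [List.map_map, List.map_map]
        refine List.map_congr_left fun z _ => ?_
        simp only [Function.comp_def]
        rw [← mul_assoc, hk2, mul_assoc]
  · rintro (_ | ⟨x0, x⟩) y
    · simpa [g] using hC'
    · exact hγ2 _ _
  · rintro (_ | ⟨x0, x⟩) y hx hy
    · exact absurd rfl hx
    · have : del (g (x0 :: x)) y = del (γ (x.map (((x0.out⁻¹ : G) : G ⧸ K) * ·)))
          (y.map ((x0.out⁻¹ : G) * ·)) := by rw [del_map]
      rw [this, hγ3 _ _ (by simpa using hy), ← hinv x0.out⁻¹ (x0 :: x) y]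
      simp

lemma zigzag (K : Subgroup G) [K.Normal] (m : ℕ) (hK : ∀ r, 0 < r → r + 1 ≤ m → Van K r)
    (b : List G → ℝ) (c : List (G ⧸ K) → ℝ)
    (hb : ∀ (g : G) y, b (y.map (g * ·)) = b y)
    (hc : ∀ (g : G) x, c (x.map ((g : G ⧸ K) * ·)) = c x)
    (Cb : ℝ) (hCb : 0 ≤ Cb) (hbb : ∀ y, |b y| ≤ Cb) (Cc : ℝ) (hCc : 0 ≤ Cc) (hcb : ∀ x, |c x| ≤ Cc)
    (hbc : ∀ y, y.length = m + 1 → del b y = c (y.map (fun g : G => (g : G ⧸ K))))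
    (hcc : ∀ x, x.length = m + 2 → del c x = 0) (p : ℕ) :
    ∃ β : List (G ⧸ K) → List G → ℝ,
      (∀ (a : G) x y, β (x.map ((a : G ⧸ K) * ·)) (y.map (a * ·)) = β x y) ∧
      (∃ C' : ℝ, 0 ≤ C' ∧ ∀ x y, |β x y| ≤ C') ∧
      (∀ y, β [] y = b y) ∧
      ∀ x y, x.length ≤ p → x.length + y.length = m + 1 →
        tot β x y = c (x ++ y.map (fun g : G => (g : G ⧸ K))) := by
  induction p with
  | zero =>
    refine ⟨fun _ y => b y, fun a _ y => hb a y, ⟨Cb, hCb, fun _ y => hbb y⟩, fun y => rfl, ?_⟩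
    intro x y hx hxy
    obtain rfl : x = [] := List.length_eq_zero_iff.1 (by omega)
    simp only [tot, List.nil_append]
    exact hbc y (by simpa using hxy)
  | succ p ih =>
    obtain ⟨β, h1, ⟨C', hC', h2⟩, h3, h4⟩ := ih
    by_cases hpm : m + 1 ≤ p
    · exact ⟨β, h1, ⟨C', hC', h2⟩, h3, fun x y hx hxy => h4 x y (by omega) hxy⟩
    obtain ⟨q, rfl⟩ : ∃ q, m = p + q := ⟨m - p, by omega⟩
    let mk : G → G ⧸ K := fun g => (g : G ⧸ K)
    let h : List (G ⧸ K) → List G → ℝ := fun x y => if x.length = p + 1 then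
      (-1) ^ (p + 1) * (c (x ++ y.map mk) - del (fun w => β w y) x) else 0
    obtain ⟨γ, g1, ⟨C'', hC'', g2⟩, g3⟩ := exactness K q
      (fun r hr hrq => hK r hr (by omega)) h
      (by
        intro g x y
        simp only [h, List.length_map]
        split_ifs
        · congr 2
          · rw [← hc g (x ++ y.map mk)]
            simp [Function.comp_def, mk]
          · rw [del_map]
            simp only [h1]
        · rfl)
      (Cc + ((p + 1 : ℕ) : ℝ) * C') (by positivity)
      (by
        intro x y hy
        simp only [h]
        split_ifs with hx
        · rw [abs_mul, abs_pow, abs_neg, abs_one, one_pow, one_mul]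
          refine (abs_sub _ _).trans (add_le_add (hcb _) ?_)
          have := del_bound (f := fun w => β w y) (C := C') x (fun w _ => h2 _ _)
          rwa [hx] at this
        · rw [abs_zero]; positivity)
      (by
        intro x y hy
        by_cases hx : x.length = p + 1
        · have e0 : h x = fun y => (-1) ^ (p + 1) *
              (c (x ++ y.map mk) - del (fun w => β w y) x) := by
            funext y; simp only [h, if_pos hx]
          rw [e0, del_smul, del_sub, del_comm]
          have e1 : del (fun w => del (β w) y) x =
              del (fun w => (-1) ^ p * (c (w ++ y.map mk) - del (fun v => β v y) w)) x := by
            apply del_congr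
            intro w hw
            have hwl : w.length = p := by omega
            have := h4 w y (by omega) (by omega)
            rw [tot_eq, hwl] at this
            rw [← this, add_sub_cancel_left, ← mul_assoc, ← mul_pow]
            simp
          have e2 := tot_append mk c x y
          rw [hcc _ (by simp; omega), tot_eq, hx] at e2
          rw [e1, del_smul, del_sub, del_del]
          have e4 : ((-1 : ℝ) ^ p) * (-1) ^ p = 1 := by rw [← mul_pow]; simp
          rw [pow_succ] at e2 ⊢
          linear_combination e2 + (del (fun w => c (w ++ y.map mk)) x) * (e4)
        · have e0 : h x = fun _ => 0 := by
            funext y; simp only [h, if_neg hx]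
          rw [e0, del_zero])
    let β' : List (G ⧸ K) → List G → ℝ := fun x y => if x.length = p + 1 then γ x y else β x y
    refine ⟨β', ?_, ⟨max C' C'', by positivity, ?_⟩, ?_, ?_⟩
    · intro a x y
      simp only [β', List.length_map, h1, g1]
    · intro x y
      simp only [β']
      split_ifs
      · exact (g2 _ _).trans (le_max_right _ _)
      · exact (h2 _ _).trans (le_max_left _ _)
    · intro y
      simp [β', h3]
    · intro x y hx hxy
      have e1 : del (fun w => β' w y) x = del (fun w => β w y) x :=
        del_congr _ fun w hw => if_neg (by omega)
      by_cases hxp : x.length = p + 1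
      · have e2 : β' x = γ x := by funext y; exact if_pos hxp
        rw [tot_eq, e1, e2, g3 x y (by rintro rfl; simp at hxp) (by omega), hxp]
        simp only [h, if_pos hxp]
        rw [← mul_assoc, ← mul_pow]
        simp [mk]
      · have e2 : β' x = β x := by funext y; exact if_neg hxp
        rw [tot_eq, e1, e2, ← tot_eq, h4 x y (by omega) hxy]

lemma relAcyclic (K : Subgroup G) [K.Normal] (m : ℕ) (hK : ∀ r, 0 < r → r + 1 ≤ m → Van K r)
    (b : (Fin m → G) → ℝ) (c : (Fin (m + 1) → G ⧸ K) → ℝ)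
    (hb : IsInvCochain b) (hbb : IsBddFun b) (hc : IsInvCochain c) (hcb : IsBddFun c)
    (hbc : gcoboundary b = inflate K c) (hcc : gcoboundary c = 0) :
    ∃ b' : (Fin m → G ⧸ K) → ℝ, IsInvCochain b' ∧ IsBddFun b' ∧ gcoboundary b' = c ∧
      ∃ A : List G → ℝ, (∀ (g : G) y, A (y.map (g * ·)) = A y) ∧
        (∀ n : ℕ, ∃ C, ∀ y, y.length = n → |A y| ≤ C) ∧
        ∀ y, b y = inflate K b' y + del A (List.ofFn y) := by
  obtain ⟨Cb, hCb⟩ := hbb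
  obtain ⟨Cc, hCc⟩ := hcb
  have hCb0 : 0 ≤ max Cb 0 := le_max_right _ _
  have hCc0 : 0 ≤ max Cc 0 := le_max_right _ _
  let mk : G → G ⧸ K := fun g => (g : G ⧸ K)
  have hcob : ∀ y : List G, y.length = m + 1 → del (ext b) y = ext c (y.map mk) := by
    intro y hy
    obtain ⟨z, rfl⟩ := exists_ofFn y hy
    rw [← gcob_eq, hbc, List.map_ofFn, ext_ofFn]; rfl
  obtain ⟨β, h1, ⟨C', hC', h2⟩, h3, h4⟩ := zigzag K m hK (ext b) (ext c)
    (fun g y => ext_inv hb g y) (fun g x => ext_inv hc _ x) (max Cb 0) hCb0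
    (ext_bdd hCb0 fun x => (hCb x).trans (le_max_left _ _)) (max Cc 0) hCc0
    (ext_bdd hCc0 fun x => (hCc x).trans (le_max_left _ _))
    hcob
    (by
      intro y hy
      obtain ⟨z, rfl⟩ := exists_ofFn y hy
      rw [← gcob_eq, hcc]; rfl) (m + 1)
  let B : List (G ⧸ K) → ℝ := fun x => β x [] + prism id (fun x w => ext c (x ++ w)) x
  let A : List G → ℝ := prism mk β
  have hmain : ∀ y : List G, y.length = m → ext b y = B (y.map mk) + del A y := by
    intro y hy
    have e := prism_id mk β y
    rw [h3] at e
    have e2 : prism mk (tot β) y = prism mk (fun x w => ext c (x ++ w.map mk)) y := by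
      apply prism_congr
      intro x w hw
      exact h4 x w (by omega) (by omega)
    have e3 : prism id (fun x w => ext c (x ++ w)) (y.map mk) =
        prism mk (fun x w => ext c (x ++ w.map mk)) y := by
      rw [prism_map mk id mk id (fun _ => rfl)]
      simp
    simp only [B, A]
    rw [e3]
    linarith
  refine ⟨fun x => B (List.ofFn x), ?_, ?_, ?_, A, ?_, ?_, ?_⟩
  · intro g x
    obtain ⟨g, rfl⟩ := QuotientGroup.mk_surjective g
    have : (List.ofFn fun i => (g : G ⧸ K) * x i) = (List.ofFn x).map ((g : G ⧸ K) * ·) := by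
      rw [List.map_ofFn]; rfl
    simp only [B]
    rw [this]
    congr 1
    · exact h1 g _ []
    · rw [prism_map id id ((g : G ⧸ K) * ·) ((g : G ⧸ K) * ·) (fun _ => rfl)]
      simp only [← List.map_append, ext_inv hc]
  · refine ⟨C' + m * max Cc 0, fun x => ?_⟩
    refine (abs_add_le _ _).trans (add_le_add (h2 _ _) ?_)
    have := prism_bound id (f := fun x w => ext c (x ++ w)) (C := max Cc 0) (List.ofFn x)
      (fun _ _ _ => ext_bdd hCc0 (fun x => (hCc x).trans (le_max_left _ _)) _)
    rwa [List.length_ofFn] at this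
  · ext x
    rw [gcob_ofFn]
    obtain ⟨y, rfl⟩ : ∃ y : Fin (m + 1) → G, x = fun i => mk (y i) := by
      choose y hy using fun i => QuotientGroup.mk_surjective (x i)
      exact ⟨y, funext fun i => (hy i).symm⟩
    have e : (List.ofFn fun i => mk (y i)) = (List.ofFn y).map mk := by rw [List.map_ofFn]; rfl
    have e1 := hcob (List.ofFn y) (by simp)
    rw [del_congr (g := fun w => B (w.map mk) + del A w) (List.ofFn y)
      (fun w hw => hmain w (by simpa using hw)), del_add, del_del, add_zero, ← del_map, ← e,
      ext_ofFn] at e1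
    exact e1
  · intro g y
    simp only [A]
    rw [prism_map mk mk (g * ·) ((g : G ⧸ K) * ·) (fun _ => rfl)]
    simp only [h1]
  · intro n
    refine ⟨n * C', fun y hy => ?_⟩
    have := prism_bound mk (f := β) (C := C') y (fun _ _ _ => h2 _ _)
    rwa [hy] at this
  · intro y
    have := hmain (List.ofFn y) (by simp)
    rw [ext_ofFn, List.map_ofFn] at this
    exact this

end fam
end BC

/-- if `K ⊴ G` and `H^q_b(K;ℝ) = 0` for all `0 < q < N`, then the inflation
map `H^n_b(G/K;ℝ) → H^n_b(G;ℝ)` is an isomorphism for all `0 ≤ n < N`: it is injective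
(an inflated bounded invariant cocycle that is a bounded coboundary over `G` is already a
bounded coboundary over `G/K`) and surjective (every bounded invariant cocycle of `G` is,
up to a bounded invariant coboundary, inflated from `G/K`). -/
theorem inflation_iso_of_boundedly_acyclic_kernel {G : Type*} [Group G]
    (K : Subgroup G) [K.Normal] (N : ℕ∞)
    (hK : ∀ q : ℕ, 0 < q → (q : ℕ∞) < N →
      ∀ c : (Fin (q + 1) → K) → ℝ, IsInvCochain c → IsBddFun c → gcoboundary c = 0 →
        ∃ b : (Fin q → K) → ℝ, IsInvCochain b ∧ IsBddFun b ∧ gcoboundary b = c) :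
    ∀ n : ℕ, (n : ℕ∞) < N →
      -- injectivity of inflation on `H^n_b`
      ((∀ c : (Fin (n + 1) → G ⧸ K) → ℝ, IsInvCochain c → IsBddFun c → gcoboundary c = 0 →
        (∃ b : (Fin n → G) → ℝ, IsInvCochain b ∧ IsBddFun b ∧ gcoboundary b = inflate K c) →
        (∃ b' : (Fin n → G ⧸ K) → ℝ, IsInvCochain b' ∧ IsBddFun b' ∧ gcoboundary b' = c)) ∧
      -- surjectivity of inflation on `H^n_b`
      (∀ c : (Fin (n + 1) → G) → ℝ, IsInvCochain c → IsBddFun c → gcoboundary c = 0 →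
        ∃ c' : (Fin (n + 1) → G ⧸ K) → ℝ, IsInvCochain c' ∧ IsBddFun c' ∧
          gcoboundary c' = 0 ∧
          ∃ b : (Fin n → G) → ℝ, IsInvCochain b ∧ IsBddFun b ∧
            c = inflate K c' + gcoboundary b)) := by

  intro n hn
  have hV : ∀ r, 0 < r → r ≤ n → BC.Van K r := fun r hr hrn =>
    hK r hr (lt_of_le_of_lt (by exact_mod_cast hrn) hn)
  constructor
  · rintro c hc hcb hcc ⟨b, hb, hbb, hbc⟩
    obtain ⟨b', h1, h2, h3, -⟩ := BC.relAcyclic K n (fun r hr hrn => hV r hr (by omega))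
      b c hb hbb hc hcb hbc hcc
    exact ⟨b', h1, h2, h3⟩
  · intro c hc hcb hcc
    obtain ⟨c', h1, h2, h3, A, hA1, hA2, hA3⟩ := BC.relAcyclic K (n + 1)
      (fun r hr hrn => hV r hr (by omega)) c 0 hc hcb (fun _ _ => rfl) ⟨0, by simp⟩
      (by rw [hcc]; rfl) (by ext x; simp [gcoboundary])
    refine ⟨c', h1, h2, h3, fun x => A (List.ofFn x), ?_, ?_, ?_⟩
    · intro g x
      have := hA1 g (List.ofFn x)
      rw [List.map_ofFn] at this
      exact this
    · obtain ⟨C, hC⟩ := hA2 n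
      exact ⟨C, fun x => hC _ (by simp)⟩
    · ext y
      rw [Pi.add_apply, BC.gcob_ofFn]
      exact hA3 y
end

section
/- If K is a boundedly acyclic normal subgroup of G and G/K is boundedly acyclic, then G is boundedly acyclic. -/
/-- Vanishing of `H^q_b(G;ℝ)` (`q ≥ 1`). -/
def HbVanishAt (G : Type*) [Group G] (q : ℕ) : Prop :=
  ∀ c : (Fin (q + 1) → G) → ℝ, IsInvCochain c → IsBddFun c → gcoboundary c = 0 →
    ∃ b : (Fin q → G) → ℝ, IsInvCochain b ∧ IsBddFun b ∧ gcoboundary b = c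

namespace BddAcyc

section basic
variable {G : Type*} [Group G]

lemma cob_cons {n : ℕ} (c : (Fin (n + 1) → G) → ℝ) (a : G) (x : Fin (n + 1) → G) :
    gcoboundary c (Fin.cons a x : Fin (n + 2) → G)
      = c x - gcoboundary (fun z : Fin n → G => c (Fin.cons a z : Fin (n + 1) → G)) x := by
  unfold gcoboundary
  rw [Fin.sum_univ_succ, sub_eq_add_neg, ← Finset.sum_neg_distrib]
  congr 1
  · simp only [Fin.val_zero, pow_zero, one_mul]
    congr 1
  · refine Finset.sum_congr rfl fun i _ => ?_
    have : (Fin.cons a x : Fin (n + 2) → G) ∘ (Fin.succ i).succAbove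
        = (Fin.cons a (x ∘ i.succAbove) : Fin (n + 1) → G) := by
      funext j
      refine Fin.cases ?_ (fun j => ?_) j
      · simp
      · simp
    rw [this, Fin.val_succ, pow_succ]
    ring

lemma cob_zero (c : (Fin 0 → G) → ℝ) (x : Fin 1 → G) (z : Fin 0 → G) :
    gcoboundary c x = c z := by
  unfold gcoboundary
  refine (Fin.sum_univ_one _).trans ?_
  rw [Fin.val_zero, pow_zero, one_mul]
  congr 1
  exact Subsingleton.elim _ _

lemma cob_sub {n : ℕ} (c d : (Fin n → G) → ℝ) (x : Fin (n + 1) → G) :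
    gcoboundary (fun z => c z - d z) x = gcoboundary c x - gcoboundary d x := by
  unfold gcoboundary
  rw [← Finset.sum_sub_distrib]
  exact Finset.sum_congr rfl fun i _ => by ring

lemma cob_const_zero {n : ℕ} (x : Fin (n + 1) → G) :
    gcoboundary (fun _ : Fin n → G => (0 : ℝ)) x = 0 := by
  simp [gcoboundary]

lemma cob_cob {n : ℕ} (c : (Fin n → G) → ℝ) (x : Fin (n + 2) → G) :
    gcoboundary (gcoboundary c) x = 0 := by
  induction n with
  | zero =>
    rw [← Fin.cons_self_tail x, cob_cons, cob_zero c _ Fin.elim0,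
      cob_zero _ _ Fin.elim0, cob_zero c _ Fin.elim0, sub_self]
  | succ n ih =>
    rw [← Fin.cons_self_tail x, cob_cons]
    simp only [cob_cons, cob_sub, ih]
    ring

lemma cob_bound {n : ℕ} (c : (Fin n → G) → ℝ) (C : ℝ) (h : ∀ x, |c x| ≤ C) (x : Fin (n + 1) → G) :
    |gcoboundary c x| ≤ (n + 1) * C := by
  unfold gcoboundary
  refine (Finset.abs_sum_le_sum_abs _ _).trans ?_
  calc _ ≤ ∑ i : Fin (n + 1), C := by
        refine Finset.sum_le_sum fun i _ => ?_
        rw [abs_mul, abs_pow, abs_neg, abs_one, one_pow, one_mul]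
        exact h _
    _ = _ := by simp

lemma cob_comp {H : Type*} [Group H] {n : ℕ} (φ : G → H) (c : (Fin n → H) → ℝ)
    (x : Fin (n + 1) → G) :
    gcoboundary (fun z : Fin n → G => c (φ ∘ z)) x = gcoboundary c (φ ∘ x) := rfl

/-- The prism homotopy between the identity and `r`. -/
def prism (r : G → G) : (n : ℕ) → ((Fin (n + 1) → G) → ℝ) → (Fin n → G) → ℝ
  | 0, _, _ => 0
  | n + 1, f, x => f (Fin.cons (x 0) (r ∘ x) : Fin (n + 2) → G)
      - prism r n (fun z => f (Fin.cons (x 0) z : Fin (n + 2) → G)) (Fin.tail x)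

lemma prism_cons (r : G → G) (n : ℕ) (f : (Fin (n + 2) → G) → ℝ) (a : G) (x : Fin n → G) :
    prism r (n + 1) f (Fin.cons a x : Fin (n + 1) → G)
      = f (Fin.cons a (r ∘ (Fin.cons a x : Fin (n + 1) → G)) : Fin (n + 2) → G)
      - prism r n (fun z => f (Fin.cons a z : Fin (n + 2) → G)) x := rfl

lemma prism_sub (r : G → G) (n : ℕ) (f g : (Fin (n + 1) → G) → ℝ) (x : Fin n → G) :
    prism r n (fun z => f z - g z) x = prism r n f x - prism r n g x := by
  induction n with
  | zero => simp [prism]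
  | succ n ih => simp only [prism, ih]; ring

lemma prism_zero (r : G → G) (n : ℕ) (x : Fin n → G) :
    prism r n (fun _ => 0) x = 0 := by
  induction n with
  | zero => simp [prism]
  | succ n ih => simp only [prism, ih]; ring

lemma prism_bound (r : G → G) (n : ℕ) (f : (Fin (n + 1) → G) → ℝ) (C : ℝ)
    (h : ∀ x, |f x| ≤ C) (x : Fin n → G) : |prism r n f x| ≤ n * C := by
  induction n with
  | zero => simp [prism]
  | succ n ih =>
    simp only [prism]
    refine (abs_sub _ _).trans ?_
    have h1 := h (Fin.cons (x 0) (r ∘ x) : Fin (n + 2) → G)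
    have h2 := ih (fun z => f (Fin.cons (x 0) z : Fin (n + 2) → G)) (fun z => h _) (Fin.tail x)
    push_cast
    linarith

lemma prism_equiv (r : G → G) (k : G) (hr : ∀ g, r (k * g) = k * r g) (n : ℕ)
    (f : (Fin (n + 1) → G) → ℝ) (x : Fin n → G) :
    prism r n f (fun i => k * x i) = prism r n (fun z => f (fun i => k * z i)) x := by
  induction n with
  | zero => simp [prism]
  | succ n ih =>
    simp only [prism]
    congr 1
    · congr 1
      funext j
      refine Fin.cases ?_ (fun j => ?_) j
      · simp
      · simp [hr]
    · have : Fin.tail (fun i => k * x i) = fun i => k * Fin.tail x i := rfl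
      rw [this, ih]
      congr 1
      funext z
      congr 1
      funext j
      refine Fin.cases ?_ (fun j => ?_) j
      · simp
      · simp

lemma prism_homotopy (r : G → G) (n : ℕ) (f : (Fin (n + 1) → G) → ℝ) (x : Fin (n + 1) → G) :
    gcoboundary (prism r n f) x + prism r (n + 1) (gcoboundary f) x = f (r ∘ x) - f x := by
  induction n with
  | zero =>
    have h0 : prism r 0 f = fun _ => 0 := rfl
    rw [h0, cob_const_zero]
    simp only [prism]
    rw [cob_cons, cob_zero _ _ Fin.elim0]
    have : (Fin.cons (x 0) Fin.elim0 : Fin 1 → G) = x := by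
      funext j; rw [show j = 0 from Fin.fin_one_eq_zero j]; rfl
    rw [this]
    ring
  | succ n ih =>
    obtain ⟨a, y, rfl⟩ : ∃ a y, x = (Fin.cons a y : Fin (n + 2) → G) :=
      ⟨_, _, (Fin.cons_self_tail x).symm⟩
    have hy := ih (fun z => f (Fin.cons a z : Fin (n + 2) → G)) y
    have hc : ∀ z : Fin n → G, (r ∘ (Fin.cons a z : Fin (n + 1) → G))
        = (Fin.cons (r a) (r ∘ z) : Fin (n + 1) → G) := by
      intro z; funext j
      refine Fin.cases ?_ (fun j => ?_) j <;> simp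
    have hc' : ∀ z : Fin (n + 1) → G, (r ∘ (Fin.cons a z : Fin (n + 2) → G))
        = (Fin.cons (r a) (r ∘ z) : Fin (n + 2) → G) := by
      intro z; funext j
      refine Fin.cases ?_ (fun j => ?_) j <;> simp
    rw [cob_cons, prism_cons, cob_cons]
    simp only [prism_cons, cob_cons, cob_sub, prism_sub, hc, hc']
    have e := cob_comp r
      (fun z : Fin n → G => f (Fin.cons a (Fin.cons (r a) z : Fin (n + 1) → G) : Fin (n + 2) → G)) y
    rw [e]
    linarith

end basic

section banach
variable (G : Type*) [Group G]

/-- Bounded functions. -/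
abbrev E (n : ℕ) := lp (fun _ : Fin n → G => ℝ) ⊤

variable {G}

lemma memE {n : ℕ} {f : (Fin n → G) → ℝ} {C : ℝ} (h : ∀ x, |f x| ≤ C) :
    Memℓp (E := fun _ : Fin n → G => ℝ) f ⊤ :=
  memℓp_infty ⟨C, by rintro _ ⟨x, rfl⟩; exact h x⟩

lemma E_le {n : ℕ} (f : E G n) (x : Fin n → G) : |f x| ≤ ‖f‖ :=
  lp.norm_apply_le_norm (by simp) f x

/-- Coboundary as a continuous linear map. -/
noncomputable def dE (n : ℕ) : E G n →L[ℝ] E G (n + 1) :=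
  LinearMap.mkContinuous
    { toFun := fun f => ⟨gcoboundary (f : (Fin n → G) → ℝ), memE (cob_bound _ _ (E_le f))⟩
      map_add' := by
        intro f g
        ext x
        simp only [gcoboundary, lp.coeFn_add, Pi.add_apply, mul_add, Finset.sum_add_distrib]
      map_smul' := by
        intro a f
        ext x
        simp only [gcoboundary, lp.coeFn_smul, Pi.smul_apply, smul_eq_mul, Finset.mul_sum,
          RingHom.id_apply]
        exact Finset.sum_congr rfl fun i _ => by ring } (n + 1) (by
    intro f
    refine lp.norm_le_of_forall_le (by positivity) fun x => ?_
    exact cob_bound _ _ (E_le f) x)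

lemma dE_apply {n : ℕ} (f : E G n) (x) : dE n f x = gcoboundary (f : (Fin n → G) → ℝ) x := rfl

/-- Evaluation. -/
noncomputable def evE {n : ℕ} (x : Fin n → G) : E G n →L[ℝ] ℝ :=
  LinearMap.mkContinuous
    { toFun := fun f => f x
      map_add' := fun f g => rfl
      map_smul' := fun a f => rfl } 1 (by
    intro f
    rw [one_mul]
    exact E_le f x)

/-- Invariant bounded cochains. -/
noncomputable def invE (G : Type*) [Group G] (n : ℕ) : Submodule ℝ (E G n) :=
  ⨅ (g : G), ⨅ (x : Fin n → G), LinearMap.ker (evE (fun i => g * x i) - evE x).toLinearMap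

lemma mem_invE {n : ℕ} (f : E G n) : f ∈ invE G n ↔ IsInvCochain (f : (Fin n → G) → ℝ) := by
  simp only [invE, Submodule.mem_iInf, LinearMap.mem_ker, IsInvCochain]
  refine forall_congr' fun g => forall_congr' fun x => ?_
  exact sub_eq_zero

lemma invE_closed (n : ℕ) : IsClosed (invE G n : Set (E G n)) := by
  simp only [invE, Submodule.coe_iInf]
  exact isClosed_iInter fun g => isClosed_iInter fun x => ContinuousLinearMap.isClosed_ker _

/-- Invariant bounded cocycles. -/
noncomputable def cocE (G : Type*) [Group G] (n : ℕ) : Submodule ℝ (E G n) :=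
  invE G n ⊓ LinearMap.ker (dE (G := G) n).toLinearMap

lemma cocE_closed (n : ℕ) : IsClosed (cocE G n : Set (E G n)) :=
  (invE_closed n).inter (ContinuousLinearMap.isClosed_ker _)

lemma inv_cob {n : ℕ} {f : (Fin n → G) → ℝ} (h : IsInvCochain f) :
    IsInvCochain (gcoboundary f) := by
  intro g x
  exact Finset.sum_congr rfl fun i _ => by
    congr 1
    exact h g (x ∘ i.succAbove)

lemma uniform {n : ℕ} (hv : HbVanishAt G n) :
    ∃ M : ℝ, ∀ (C : ℝ) (c : (Fin (n + 1) → G) → ℝ), IsInvCochain c → (∀ x, |c x| ≤ C) →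
      gcoboundary c = 0 →
      ∃ b : (Fin n → G) → ℝ, IsInvCochain b ∧ (∀ x, |b x| ≤ M * C) ∧ gcoboundary b = c := by
  haveI : CompleteSpace (invE G n) := (invE_closed (G := G) n).completeSpace_coe
  haveI : CompleteSpace (cocE G (n + 1)) := (cocE_closed (G := G) (n + 1)).completeSpace_coe
  let T : invE G n →L[ℝ] cocE G (n + 1) :=
    ((dE n).comp (invE G n).subtypeL).codRestrict (cocE G (n + 1)) (by
      intro f
      refine Submodule.mem_inf.2 ⟨(mem_invE _).2 (inv_cob ((mem_invE _).1 f.2)), ?_⟩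
      rw [LinearMap.mem_ker]
      ext x
      exact cob_cob _ x)
  have hT : Function.Surjective T := by
    rintro ⟨c, hc⟩
    obtain ⟨h1, h2⟩ := Submodule.mem_inf.1 hc
    obtain ⟨b, hb1, ⟨C, hb2⟩, hb3⟩ := hv (c : (Fin (n + 1) → G) → ℝ) ((mem_invE _).1 h1)
      ⟨‖c‖, E_le c⟩ (by
        funext x
        exact congrArg (fun z : E G (n + 2) => z x) (LinearMap.mem_ker.1 h2))
    refine ⟨⟨⟨b, memE hb2⟩, (mem_invE _).2 hb1⟩, ?_⟩
    apply Subtype.ext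
    apply lp.ext
    exact hb3
  obtain ⟨M, hM, h⟩ := T.exists_preimage_norm_le hT
  refine ⟨M, fun C c hc hC hd => ?_⟩
  have hC0 : 0 ≤ C := (abs_nonneg _).trans (hC fun _ => 1)
  let c' : E G (n + 1) := ⟨c, memE hC⟩
  have hc' : c' ∈ cocE G (n + 1) := by
    refine Submodule.mem_inf.2 ⟨(mem_invE _).2 hc, ?_⟩
    rw [LinearMap.mem_ker]
    apply lp.ext
    exact hd
  have hn : ‖c'‖ ≤ C := lp.norm_le_of_forall_le hC0 hC
  obtain ⟨b, hb, hb'⟩ := h ⟨c', hc'⟩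
  refine ⟨((b : E G n) : (Fin n → G) → ℝ), (mem_invE _).1 b.2, fun x => ?_, ?_⟩
  · refine (E_le (b : E G n) x).trans (hb'.trans ?_)
    exact mul_le_mul_of_nonneg_left hn hM.le
  · have := congrArg (fun z : cocE G (n + 1) => ((z : E G (n + 1)) : (Fin (n + 1) → G) → ℝ)) hb
    exact this

end banach

section ext
variable {G : Type*} [Group G] (K : Subgroup G) [K.Normal]

lemma exists_rho : ∃ ρ : G → K, ∀ (k : K) (g : G), ρ (k * g) = k * ρ g := by
  refine ⟨fun g => ⟨g * ((QuotientGroup.mk g : G ⧸ K).out)⁻¹, ?_⟩, fun k g => ?_⟩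
  · rw [← QuotientGroup.eq_one_iff]
    simp
  · apply Subtype.ext
    have : (QuotientGroup.mk ((k : G) * g) : G ⧸ K) = QuotientGroup.mk g := by
      rw [QuotientGroup.mk_mul, (QuotientGroup.eq_one_iff (k : G)).2 k.2, one_mul]
    simp [this, mul_assoc]

/-- Uniform solutions for `K`-invariant cocycles on `G`. -/
lemma uniformG {n : ℕ} (hv : HbVanishAt K (n + 1)) :
    ∃ M : ℝ, ∀ (C : ℝ) (c : (Fin (n + 2) → G) → ℝ),
      (∀ (k : K) x, c (fun i => k * x i) = c x) → (∀ x, |c x| ≤ C) →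
      gcoboundary c = 0 →
      ∃ b : (Fin (n + 1) → G) → ℝ, (∀ (k : K) x, b (fun i => k * x i) = b x) ∧
        (∀ x, |b x| ≤ M * C) ∧ gcoboundary b = c := by
  obtain ⟨M, hM⟩ := uniform hv
  obtain ⟨ρ, hρ⟩ := exists_rho K
  refine ⟨M + (n + 1 : ℕ), fun C c hc hC hd => ?_⟩
  obtain ⟨b, hb1, hb2, hb3⟩ := hM C (fun x => c ((fun k : K => (k : G)) ∘ x))
    (fun k x => hc k _) (fun x => hC _) (by
      funext x
      rw [cob_comp (fun k : K => (k : G)) c x, hd]; rfl)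
  refine ⟨fun x => b (ρ ∘ x) - prism (fun g => (ρ g : G)) (n + 1) c x, fun k x => ?_,
    fun x => ?_, ?_⟩
  · beta_reduce
    rw [prism_equiv (fun g => (ρ g : G)) (k : G) (fun g => by rw [hρ]; rfl)]
    simp only [hc]
    congr 1
    rw [← hb1 k (ρ ∘ x)]
    congr 1
    funext i
    exact hρ k (x i)
  · refine (abs_sub _ _).trans ?_
    have h1 := hb2 (ρ ∘ x)
    have h2 := prism_bound (fun g => (ρ g : G)) (n + 1) c C hC x
    linarith
  · funext x
    rw [cob_sub, cob_comp ρ b x, hb3]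
    have h := prism_homotopy (fun g => (ρ g : G)) (n + 1) c x
    have h0 : gcoboundary c = fun _ => 0 := hd
    rw [h0, prism_zero] at h
    have e : c ((fun k : K => (k : G)) ∘ ρ ∘ x) = c ((fun g => (ρ g : G)) ∘ x) := rfl
    linarith

/-- Bounded invariant functions on `Q^p × G^n`. -/
def Good {p n : ℕ} (F : (Fin p → G ⧸ K) → (Fin n → G) → ℝ) : Prop :=
  (∀ (g : G) y x, F (fun i => (g : G ⧸ K) * y i) (fun i => g * x i) = F y x) ∧
  ∃ C : ℝ, ∀ y x, |F y x| ≤ C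

variable {K}

/-- Coboundary in the `G` direction. -/
noncomputable def dG {p n : ℕ} (F : (Fin p → G ⧸ K) → (Fin n → G) → ℝ) :
    (Fin p → G ⧸ K) → (Fin (n + 1) → G) → ℝ := fun y => gcoboundary (F y)

/-- Coboundary in the quotient direction. -/
noncomputable def dQ {p n : ℕ} (F : (Fin p → G ⧸ K) → (Fin n → G) → ℝ) :
    (Fin (p + 1) → G ⧸ K) → (Fin n → G) → ℝ := fun y x => gcoboundary (fun z => F z x) y

lemma dG_dQ {p n : ℕ} (F : (Fin p → G ⧸ K) → (Fin n → G) → ℝ) : dG (dQ F) = dQ (dG F) := by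
  funext y x
  simp only [dG, dQ, gcoboundary, Finset.mul_sum]
  rw [Finset.sum_comm]
  exact Finset.sum_congr rfl fun i _ => Finset.sum_congr rfl fun j _ => by ring

lemma dG_dG {p n : ℕ} (F : (Fin p → G ⧸ K) → (Fin n → G) → ℝ) : dG (dG F) = 0 := by
  funext y x
  exact cob_cob _ x

lemma dQ_dQ {p n : ℕ} (F : (Fin p → G ⧸ K) → (Fin n → G) → ℝ) : dQ (dQ F) = 0 := by
  funext y x
  exact cob_cob (fun z => F z x) y

lemma dG_sub {p n : ℕ} (F H : (Fin p → G ⧸ K) → (Fin n → G) → ℝ) :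
    dG (F - H) = dG F - dG H := by
  funext y x
  exact cob_sub _ _ x

lemma dQ_sub {p n : ℕ} (F H : (Fin p → G ⧸ K) → (Fin n → G) → ℝ) :
    dQ (F - H) = dQ F - dQ H := by
  funext y x
  exact cob_sub (fun z => F z x) (fun z => H z x) y

lemma dG_zero {p n : ℕ} : dG (0 : (Fin p → G ⧸ K) → (Fin n → G) → ℝ) = 0 := by
  funext y x
  exact cob_const_zero x

lemma dQ_zero {p n : ℕ} : dQ (0 : (Fin p → G ⧸ K) → (Fin n → G) → ℝ) = 0 := by
  funext y x
  exact cob_const_zero y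

lemma Good.dG {p n : ℕ} {F : (Fin p → G ⧸ K) → (Fin n → G) → ℝ} (h : Good K F) :
    Good K (dG F) := by
  obtain ⟨h1, C, h2⟩ := h
  refine ⟨fun g y x => ?_, _, fun y x => cob_bound _ C (h2 y) x⟩
  simp only [BddAcyc.dG, BddAcyc.dQ, gcoboundary]
  refine Finset.sum_congr rfl fun i _ => ?_
  exact congrArg _ (h1 g y (x ∘ i.succAbove))

lemma Good.dQ {p n : ℕ} {F : (Fin p → G ⧸ K) → (Fin n → G) → ℝ} (h : Good K F) :
    Good K (dQ F) := by
  obtain ⟨h1, C, h2⟩ := h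
  refine ⟨fun g y x => ?_, _, fun y x => cob_bound (fun z => F z x) C (fun z => h2 z x) y⟩
  simp only [BddAcyc.dG, BddAcyc.dQ, gcoboundary]
  refine Finset.sum_congr rfl fun i _ => ?_
  exact congrArg _ (h1 g (y ∘ i.succAbove) x)

lemma Good.sub {p n : ℕ} {F H : (Fin p → G ⧸ K) → (Fin n → G) → ℝ} (h : Good K F)
    (h' : Good K H) : Good K (F - H) := by
  obtain ⟨h1, C, h2⟩ := h
  obtain ⟨h1', C', h2'⟩ := h'
  refine ⟨fun g y x => ?_, C + C', fun y x => ?_⟩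
  · simp only [Pi.sub_apply, h1, h1']
  · exact (abs_sub _ _).trans (add_le_add (h2 y x) (h2' y x))

lemma dG_inj {p : ℕ} {F : (Fin p → G ⧸ K) → (Fin 0 → G) → ℝ} (h : dG F = 0) : F = 0 := by
  funext y x
  rw [← cob_zero (F y) (fun _ => 1) x]
  exact congrFun (congrFun h y) _

lemma dQ_inj {n : ℕ} {F : (Fin 0 → G ⧸ K) → (Fin n → G) → ℝ} (h : dQ F = 0) : F = 0 := by
  funext y x
  show F y x = 0
  rw [← cob_zero (fun z => F z x) (fun _ => 1) y]
  exact congrFun (congrFun h _) x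

lemma row_exact {p n : ℕ} {F : (Fin (p + 1) → G ⧸ K) → (Fin (n + 1) → G) → ℝ} (hF : Good K F)
    (h : dQ F = 0) : ∃ H : (Fin p → G ⧸ K) → (Fin (n + 1) → G) → ℝ, Good K H ∧ dQ H = F := by
  obtain ⟨h1, C, h2⟩ := hF
  refine ⟨fun y x => F (Fin.cons (x 0 : G ⧸ K) y : Fin (p + 1) → G ⧸ K) x,
    ⟨fun g y x => ?_, C, fun y x => h2 _ _⟩, ?_⟩
  · beta_reduce
    rw [← h1 g _ x]
    congr 1
    funext j
    refine Fin.cases ?_ (fun j => ?_) j <;> simp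
  · funext y x
    have := congrFun (congrFun h (Fin.cons (x 0 : G ⧸ K) y : Fin (p + 2) → G ⧸ K)) x
    simp only [dQ, cob_cons] at this
    exact (sub_eq_zero.1 this).symm

lemma col_exact (hK : ∀ q : ℕ, 0 < q → HbVanishAt K q) {p n : ℕ}
    {F : (Fin (p + 1) → G ⧸ K) → (Fin (n + 1) → G) → ℝ} (hF : Good K F)
    (h : dG F = 0) : ∃ H : (Fin (p + 1) → G ⧸ K) → (Fin n → G) → ℝ, Good K H ∧ dG H = F := by
  obtain ⟨h1, C, h2⟩ := hF
  cases n with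
  | zero =>
    have key : ∀ y x x', F y x = F y x' := by
      intro y x x'
      have := congrFun (congrFun h y) (Fin.cons (x' 0) x : Fin 2 → G)
      simp only [dG, cob_cons] at this
      rw [cob_zero _ _ Fin.elim0] at this
      have e : (Fin.cons (x' 0) Fin.elim0 : Fin 1 → G) = x' := by
        funext j; rw [show j = 0 from Fin.fin_one_eq_zero j]; rfl
      rw [e] at this
      exact sub_eq_zero.1 this
    refine ⟨fun y _ => F y (fun _ => 1), ⟨fun g y x => ?_, C, fun y x => h2 _ _⟩, ?_⟩
    · beta_reduce
      rw [← h1 g y]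
      exact key _ _ _
    · funext y x
      rw [dG, cob_zero _ _ Fin.elim0]
      exact key _ _ _
  | succ n =>
    obtain ⟨M, hM⟩ := uniformG K (hK (n + 1) n.succ_pos)
    have hk : ∀ (k : K) (y : Fin (p + 1) → G ⧸ K), (fun i => ((k : G) : G ⧸ K) * y i) = y := by
      intro k y
      funext i
      rw [(QuotientGroup.eq_one_iff (k : G)).2 k.2, one_mul]
    have := fun y => hM C (F y) (fun k x => by
      have := h1 (k : G) y x
      rwa [hk] at this) (h2 y) (congrFun h y)
    choose B hB1 hB2 hB3 using this
    refine ⟨fun y x => B (fun i => (((y 0).out⁻¹ : G) : G ⧸ K) * y i)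
      (fun i => (y 0).out⁻¹ * x i), ⟨fun g y x => ?_, M * C, fun y x => hB2 _ _⟩, ?_⟩
    · set s := (y 0).out with hs
      set t := ((g : G ⧸ K) * y 0).out with ht
      have hsq : (s : G ⧸ K) = y 0 := QuotientGroup.out_eq' _
      have htq : (t : G ⧸ K) = g * y 0 := QuotientGroup.out_eq' _
      have hmem : t⁻¹ * g * s ∈ K := by
        rw [← QuotientGroup.eq_one_iff]
        simp [hsq, htq]
      have e1 : (fun i => ((t⁻¹ : G) : G ⧸ K) * ((g : G ⧸ K) * y i))
          = fun i => ((s⁻¹ : G) : G ⧸ K) * y i := by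
        rw [← hk ⟨_, hmem⟩ (fun i => ((s⁻¹ : G) : G ⧸ K) * y i)]
        funext i
        simp [mul_assoc]
      have e2 : (fun i => t⁻¹ * (g * x i))
          = fun i => ((⟨_, hmem⟩ : K) : G) * (s⁻¹ * x i) := by
        funext i
        simp [mul_assoc]
      beta_reduce
      rw [e1, e2]
      exact hB1 _ _ _
    · funext y x
      have e := congrFun (hB3 (fun i => (((y 0).out⁻¹ : G) : G ⧸ K) * y i))
        (fun i => (y 0).out⁻¹ * x i)
      rw [h1] at e
      exact e

lemma main (hK : ∀ q : ℕ, 0 < q → HbVanishAt K q)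
    (hQ : ∀ q : ℕ, 0 < q → HbVanishAt (G ⧸ K) q) (n : ℕ) : ∀ (p : ℕ)
    (F : (Fin (p + 1) → G ⧸ K) → (Fin (n + 1) → G) → ℝ), Good K F → dG F = 0 → dQ F = 0 →
    ∃ H : (Fin (p + 1) → G ⧸ K) → (Fin n → G) → ℝ, Good K H ∧ dG H = F ∧ dQ H = 0 := by
  induction n with
  | zero =>
    intro p F hF h1 h2
    obtain ⟨H, hH, e⟩ := col_exact hK hF h1
    refine ⟨H, hH, e, dG_inj ?_⟩
    rw [dG_dQ, e, h2]
  | succ n ih =>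
    intro p F hF h1 h2
    obtain ⟨H, hH, e⟩ := col_exact hK hF h1
    obtain ⟨v, hv, hv1, hv2⟩ := ih (p + 1) (dQ H) hH.dQ (by rw [dG_dQ, e, h2]) (dQ_dQ H)
    obtain ⟨w, hw, ew⟩ : ∃ w : (Fin (p + 1) → G ⧸ K) → (Fin n → G) → ℝ,
        Good K w ∧ dQ w = v := by
      cases n with
      | succ n => exact row_exact hv hv2
      | zero =>
        obtain ⟨i1, C, i2⟩ := hv
        obtain ⟨b, hb1, ⟨D, hb2⟩, hb3⟩ := hQ (p + 1) p.succ_pos (fun y => v y Fin.elim0)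
          (by
            intro g y
            obtain ⟨g, rfl⟩ := QuotientGroup.mk_surjective g
            have := i1 g y Fin.elim0
            beta_reduce
            rw [← this]
            congr 1
            exact Subsingleton.elim _ _)
          ⟨C, fun y => i2 y _⟩ (by
            funext y
            exact congrFun (congrFun hv2 y) Fin.elim0)
        refine ⟨fun y _ => b y, ⟨fun g y x => hb1 g y, D, fun y x => hb2 y⟩, ?_⟩
        funext y x
        rw [Subsingleton.elim x Fin.elim0]
        exact congrFun hb3 y
    refine ⟨H - dG w, hH.sub hw.dG, ?_, ?_⟩
    · rw [dG_sub, dG_dG, e, sub_zero]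
    · rw [dQ_sub, ← dG_dQ, ew, hv1, sub_self]

end ext

end BddAcyc

open BddAcyc in
/-- if `K ⊴ G` is boundedly acyclic and `G/K` is boundedly acyclic, then
`G` is boundedly acyclic. -/
theorem extension_boundedly_acyclic {G : Type*} [Group G] (K : Subgroup G) [K.Normal]
    (hK : ∀ q : ℕ, 0 < q → HbVanishAt K q)
    (hQ : ∀ q : ℕ, 0 < q → HbVanishAt (G ⧸ K) q) :
    ∀ q : ℕ, 0 < q → HbVanishAt G q := by
  rintro (_ | q) hq
  · exact absurd hq (lt_irrefl _)
  intro c hc ⟨C, hC⟩ hd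
  let F : (Fin 0 → G ⧸ K) → (Fin (q + 2) → G) → ℝ := fun _ x => c x
  have hF : Good K F := ⟨fun g y x => hc g x, C, fun y x => hC x⟩
  have hdF : dG F = 0 := by
    funext y
    exact hd
  obtain ⟨H, hH, h1, h2⟩ := BddAcyc.main hK hQ (q + 1) 0 (dQ F) hF.dQ
    (by rw [dG_dQ, hdF, dQ_zero]) (dQ_dQ F)
  obtain ⟨a, ⟨ha1, D, ha2⟩, ha⟩ := row_exact hH h2
  have key : dG a - F = 0 := dQ_inj (by rw [dQ_sub, ← dG_dQ, ha, h1, sub_self])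
  refine ⟨a Fin.elim0, fun g x => ?_, ⟨D, fun x => ha2 _ x⟩, ?_⟩
  · rw [← ha1 g Fin.elim0 x]
    congr 1
    exact Subsingleton.elim _ _
  · exact congrFun (sub_eq_zero.1 key) Fin.elim0
end
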